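/- (Theorem 5, capacitive case, Huang) Let N ≥ 2, β > 0, C > 0, and consider the Josephson junction array with pure capacitive load: β φ_k'' + φ_k' + sin(φ_k) + (C/N) Σ_{j=1}^N φ_j'' = I for k = 1, …, N. If I > 1 + 2C/(β + C), then this system admits no semirotor solution: there is no solution in which some nonempty proper subset of the junctions follows a running function ψ₁ of period T while the remaining junctions follow a genuinely T-periodic function ψ₂. -/

import Mathlib

open Real

/-- `ψ` is a running function of period `T`: `ψ (t + T) = ψ t + 2π` for all `t`. -/
def IsRunning (ψ : ℝ → ℝ) (T : ℝ) : Prop :=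
  ∀ t : ℝ, ψ (t + T) = ψ t + 2 * Real.pi

/-- The family of junction waveforms of a semirotor: the junctions in `S` follow `ψ₁`
and the remaining junctions follow `ψ₂`. -/
def semiFam (N : ℕ) (S : Finset (Fin N)) (ψ₁ ψ₂ : ℝ → ℝ) : Fin N → ℝ → ℝ :=
  fun j t => if j ∈ S then ψ₁ t else ψ₂ t

/-!
Apart from the supercurrent `sin φ_k`, every term of the `k`-th circuit equation is a total time
derivative: the equation reads `Q_k' + sin φ_k = I` with `Q_k = β φ_k' + φ_k + (C/N) ∑_j φ_j'`. In a
semirotor all the velocities `φ_j'` are `T`-periodic, those of the running junctions included, so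
`Q_k` is `T`-periodic for every non-running junction `k`. By Rolle's theorem `Q_k'` vanishes
somewhere, and there `I = sin φ_k ≤ 1`.
-/

lemma exists_deriv_eq_zero_of_periodic {f : ℝ → ℝ} {T : ℝ} (hT : T ≠ 0) (hf : Continuous f)
    (hper : Function.Periodic f T) : ∃ t, deriv f t = 0 := by
  have heq : f 0 = f |T| := by
    rcases abs_choice T with h | h <;> rw [h]
    exacts [hper.eq.symm, hper.neg_eq.symm]
  obtain ⟨t, -, ht⟩ := exists_deriv_eq_zero (abs_pos.2 hT) hf.continuousOn heq
  exact ⟨t, ht⟩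

lemma periodic_deriv_of_add_eq_add_const {𝕜 E : Type*} [NontriviallyNormedField 𝕜]
    [NormedAddCommGroup E] [NormedSpace 𝕜 E] {f : 𝕜 → E} {T : 𝕜} {c : E}
    (h : ∀ t, f (t + T) = f t + c) : Function.Periodic (deriv f) T := fun t => by
  rw [← deriv_comp_add_const, funext h, deriv_add_const]

lemma IsRunning.periodic_deriv {ψ : ℝ → ℝ} {T : ℝ} (h : IsRunning ψ T) :
    Function.Periodic (deriv ψ) T :=
  periodic_deriv_of_add_eq_add_const h

lemma periodic_deriv_of_periodic {𝕜 E : Type*} [NontriviallyNormedField 𝕜]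
    [NormedAddCommGroup E] [NormedSpace 𝕜 E] {f : 𝕜 → E} {T : 𝕜} (h : Function.Periodic f T) :
    Function.Periodic (deriv f) T :=
  periodic_deriv_of_add_eq_add_const (c := 0) fun t => by rw [h t, add_zero]

section Array

variable {ι : Type*} [Fintype ι] {β γ I T : ℝ} {φ : ι → ℝ → ℝ} {k : ι}

/-- The charge `Q_k = β φ_k' + φ_k + γ ∑_j φ_j'` whose time derivative is the linear part of the
`k`-th circuit equation. The coupling `γ` is `C / N` in the array of the theorem. -/
noncomputable def linearCharge (β γ : ℝ) (φ : ι → ℝ → ℝ) (k : ι) (t : ℝ) : ℝ :=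
  β * deriv (φ k) t + φ k t + γ * ∑ j, deriv (φ j) t

lemma hasDerivAt_linearCharge (hφ : Differentiable ℝ (φ k))
    (hφ' : ∀ j, Differentiable ℝ (deriv (φ j))) (t : ℝ) :
    HasDerivAt (linearCharge β γ φ k)
      (β * deriv (deriv (φ k)) t + deriv (φ k) t + γ * ∑ j, deriv (deriv (φ j)) t) t :=
  (((hφ' k t).hasDerivAt.const_mul β).add (hφ t).hasDerivAt).add
    ((HasDerivAt.fun_sum fun j _ => (hφ' j t).hasDerivAt).const_mul γ)

lemma periodic_linearCharge (hk : Function.Periodic (φ k) T)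
    (hvel : ∀ j, Function.Periodic (deriv (φ j)) T) :
    Function.Periodic (linearCharge β γ φ k) T := fun t => by
  simp only [linearCharge, hk t, fun j => hvel j t]

lemma exists_apply_eq_drive_of_periodic {g : ℝ → ℝ} (hT : T ≠ 0) (hφ : Differentiable ℝ (φ k))
    (hφ' : ∀ j, Differentiable ℝ (deriv (φ j))) (hk : Function.Periodic (φ k) T)
    (hvel : ∀ j, Function.Periodic (deriv (φ j)) T)
    (hode : ∀ t, β * deriv (deriv (φ k)) t + deriv (φ k) t + g (φ k t) +
      γ * ∑ j, deriv (deriv (φ j)) t = I) :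
    ∃ t, g (φ k t) = I := by
  have hQ := hasDerivAt_linearCharge (β := β) (γ := γ) hφ hφ'
  obtain ⟨t, ht⟩ := exists_deriv_eq_zero_of_periodic hT
    (continuous_iff_continuousAt.2 fun t => (hQ t).continuousAt) (periodic_linearCharge hk hvel)
  rw [(hQ t).deriv] at ht
  exact ⟨t, by linarith [hode t]⟩

theorem huang_no_semirotor_capacitive_general (hI : 1 < |I|) (hT : T ≠ 0)
    (hφ : ∀ j, Differentiable ℝ (φ j)) (hφ' : ∀ j, Differentiable ℝ (deriv (φ j)))
    (hvel : ∀ j, Function.Periodic (deriv (φ j)) T)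
    (hode : ∀ t, β * deriv (deriv (φ k)) t + deriv (φ k) t + Real.sin (φ k t) +
      γ * ∑ j, deriv (deriv (φ j)) t = I) :
    ¬ Function.Periodic (φ k) T := fun hk => by
  obtain ⟨t, ht⟩ := exists_apply_eq_drive_of_periodic hT (hφ k) hφ' hk hvel hode
  exact hI.not_ge (ht ▸ Real.abs_sin_le_one (φ k t))

end Array

section SemiFam

variable {N : ℕ} {S : Finset (Fin N)} {ψ₁ ψ₂ : ℝ → ℝ}

lemma semiFam_of_mem {j : Fin N} (hj : j ∈ S) : semiFam N S ψ₁ ψ₂ j = ψ₁ :=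
  funext fun _ => if_pos hj

lemma semiFam_of_notMem {j : Fin N} (hj : j ∉ S) : semiFam N S ψ₁ ψ₂ j = ψ₂ :=
  funext fun _ => if_neg hj

lemma forall_semiFam {P : (ℝ → ℝ) → Prop} (h₁ : P ψ₁) (h₂ : P ψ₂) (j : Fin N) :
    P (semiFam N S ψ₁ ψ₂ j) := by
  by_cases hj : j ∈ S
  · rwa [semiFam_of_mem hj]
  · rwa [semiFam_of_notMem hj]

lemma contDiff_semiFam {n : WithTop ℕ∞} (h₁ : ContDiff ℝ n ψ₁) (h₂ : ContDiff ℝ n ψ₂) (j : Fin N) :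
    ContDiff ℝ n (semiFam N S ψ₁ ψ₂ j) :=
  forall_semiFam h₁ h₂ j

lemma periodic_deriv_semiFam {T : ℝ} (h₁ : IsRunning ψ₁ T) (h₂ : Function.Periodic ψ₂ T)
    (j : Fin N) : Function.Periodic (deriv (semiFam N S ψ₁ ψ₂ j)) T :=
  forall_semiFam (P := fun ψ => Function.Periodic (deriv ψ) T) h₁.periodic_deriv
    (periodic_deriv_of_periodic h₂) j

end SemiFam

/-- **Theorem 5, capacitive case (Huang).** For the Josephson junction array with pure
capacitive load, `β φ_k'' + φ_k' + sin (φ_k) + (C/N) ∑_j φ_j'' = I`, if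
`I > 1 + 2C/(β + C)` then no semirotor solution exists: there is no solution in which
the junctions in some nonempty proper subset follow a running function `ψ₁` of period
`T` while the remaining junctions follow a `T`-periodic function `ψ₂`. -/
theorem huang_no_semirotor_capacitive (N : ℕ) (hN : 2 ≤ N) (β C I : ℝ)
    (hβ : 0 < β) (hC : 0 < C) (hI : 1 + 2 * C / (β + C) < I) :
    ¬ ∃ (S : Finset (Fin N)) (ψ₁ ψ₂ : ℝ → ℝ) (T : ℝ),
        S.Nonempty ∧ S ≠ Finset.univ ∧ 0 < T ∧
        ContDiff ℝ 2 ψ₁ ∧ ContDiff ℝ 2 ψ₂ ∧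
        IsRunning ψ₁ T ∧ (∀ t : ℝ, ψ₂ (t + T) = ψ₂ t) ∧
        (∀ k : Fin N, ∀ t : ℝ,
          β * deriv (deriv (semiFam N S ψ₁ ψ₂ k)) t + deriv (semiFam N S ψ₁ ψ₂ k) t +
            Real.sin (semiFam N S ψ₁ ψ₂ k t) +
            (C / (N : ℝ)) * ∑ j : Fin N, deriv (deriv (semiFam N S ψ₁ ψ₂ j)) t = I) := by
  rintro ⟨S, ψ₁, ψ₂, T, -, hS, hT, hψ₁, hψ₂, hrun, hper, hode⟩
  obtain ⟨k, hk⟩ : ∃ k, k ∉ S := not_forall.1 (mt Finset.eq_univ_iff_forall.2 hS)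
  have hI_abs : 1 < |I| :=
    ((lt_add_of_pos_right 1 (by positivity)).trans hI).trans_le (le_abs_self I)
  exact huang_no_semirotor_capacitive_general hI_abs hT.ne'
    (fun j => (contDiff_semiFam hψ₁ hψ₂ j).differentiable two_ne_zero)
    (fun j => (contDiff_semiFam hψ₁ hψ₂ j).differentiable_deriv_two)
    (periodic_deriv_semiFam hrun hper) (hode k) (by rwa [semiFam_of_notMem hk])
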